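/- arXiv:2012.08766 — 2 statements merged into one kernel-verified Lean document; each statement's English description precedes it below -/
import Mathlib

section
/- Let 1<p<∞, η>0 and w ∈ Q(ℝ₊). Then for every u ∈ C_c^1((0,η]) one has ∫_0^η |u'(t)|^p W_p(t) dt ≥ Λ_p ∫_0^η |u(t)|^p W_p(t) / F_η(t)^p dt + Λ_p^{1/p'} f_η(η)^{1-p} |u(η)|^p. -/
open MeasureTheory Set

/-- `f_η(t) = ∫_0^t w(s)⁻¹ ds`  (case `w ∈ Q(ℝ₊)`). -/
noncomputable def fQ (w : ℝ → ℝ) (t : ℝ) : ℝ := ∫ s in (0:ℝ)..t, (w s)⁻¹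

/-- `F_η(t) = w(t) f_η(t)`. -/
noncomputable def FQ (w : ℝ → ℝ) (t : ℝ) : ℝ := w t * fQ w t

/-- `W_p(t) = w(t)^(p-1)`. -/
noncomputable def Wp (w : ℝ → ℝ) (p t : ℝ) : ℝ := w t ^ (p - 1)

/-- Young's inequality in tangent-line form: `x ↦ x ^ p` lies above its tangent at `b`. -/
theorem Real.mul_rpow_sub_one_le {p a b : ℝ} (hp : 1 < p) (ha : 0 ≤ a) (hb : 0 ≤ b) :
    p * (a * b ^ (p - 1)) ≤ a ^ p + (p - 1) * b ^ p := by
  have hp1 : 0 < p - 1 := by linarith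
  have hpq : p.HolderConjugate (p / (p - 1)) := Real.HolderConjugate.conjExponent hp
  have h := Real.young_inequality_of_nonneg ha (Real.rpow_nonneg hb (p - 1)) hpq
  rw [← Real.rpow_mul hb, mul_div_cancel₀ p hp1.ne'] at h
  calc p * (a * b ^ (p - 1)) ≤ p * (a ^ p / p + b ^ p / (p / (p - 1))) := by gcongr
    _ = a ^ p + (p - 1) * b ^ p := by field_simp

section Primitive

variable {w : ℝ → ℝ}

theorem intervalIntegrable_inv_of_integrableOn_Ioo
    (hwQ : ∀ b, 0 < b → IntegrableOn (fun s => (w s)⁻¹) (Ioo 0 b)) {t : ℝ} (ht : 0 < t) :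
    IntervalIntegrable (fun s => (w s)⁻¹) volume 0 t := by
  rw [intervalIntegrable_iff_integrableOn_Ioo_of_le ht.le]
  exact hwQ t ht

theorem fQ_pos (hw_pos : ∀ t, 0 < t → 0 < w t)
    (hwQ : ∀ b, 0 < b → IntegrableOn (fun s => (w s)⁻¹) (Ioo 0 b)) {t : ℝ} (ht : 0 < t) :
    0 < fQ w t :=
  intervalIntegral.intervalIntegral_pos_of_pos_on
    (intervalIntegrable_inv_of_integrableOn_Ioo hwQ ht)
    (fun s hs => inv_pos.2 (hw_pos s hs.1)) ht

theorem hasDerivAt_fQ (hw_pos : ∀ t, 0 < t → 0 < w t) (hw : ContinuousOn w (Ioi 0))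
    (hwQ : ∀ b, 0 < b → IntegrableOn (fun s => (w s)⁻¹) (Ioo 0 b)) {t : ℝ} (ht : 0 < t) :
    HasDerivAt (fQ w) (w t)⁻¹ t := by
  have hc : ContinuousOn (fun s => (w s)⁻¹) (Ioi 0) := hw.inv₀ fun s hs => (hw_pos s hs).ne'
  exact intervalIntegral.integral_hasDerivAt_right
    (intervalIntegrable_inv_of_integrableOn_Ioo hwQ ht)
    (hc.stronglyMeasurableAtFilter isOpen_Ioi t ht) (hc.continuousAt (Ioi_mem_nhds ht))

end Primitive

/-- The pointwise inequality behind the Hardy inequality: the derivative of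
`(1 - 1/p)^(p-1) f^(1-p) |u|^p`, where `f' = 1/w`, is at most the difference of the integrands. -/
theorem hardy_pointwise {p w f u v : ℝ} (hp : 1 < p) (hw : 0 < w) (hf : 0 < f) :
    (1 - 1 / p) ^ (p - 1) * (w⁻¹ * (1 - p) * f ^ (1 - p - 1) * |u| ^ p
        + f ^ (1 - p) * (p * |u| ^ (p - 2) * u * v))
      ≤ |v| ^ p * w ^ (p - 1) - (1 - 1 / p) ^ p * (|u| ^ p * w ^ (p - 1) / (w * f) ^ p) := by
  have hp0 : 0 < p := by linarith
  have hc : 0 < 1 - 1 / p := by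
    rw [sub_pos, div_lt_one hp0]
    exact hp
  have hpc : p * (1 - 1 / p) = p - 1 := by field_simp
  set c := 1 - 1 / p
  have huv : |u| ^ (p - 2) * u * v ≤ |u| ^ (p - 1) * |v| := by
    rcases eq_or_ne u 0 with rfl | hu
    · simp only [mul_zero, zero_mul]
      positivity
    · have hu' : 0 < |u| := abs_pos.2 hu
      have h1 : |u| ^ (p - 1) = |u| ^ (p - 2) * |u| := by
        rw [← Real.rpow_add_one hu'.ne']
        congr 1
        ring
      rw [h1, mul_assoc, mul_assoc, ← abs_mul]
      gcongr
      exact le_abs_self _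
  have hY := Real.mul_rpow_sub_one_le hp (abs_nonneg v)
    (show 0 ≤ c * |u| / (w * f) by positivity)
  have hY' := mul_le_mul_of_nonneg_right hY (Real.rpow_nonneg hw.le (p - 1))
  have e1 : (c * |u| / (w * f)) ^ (p - 1) * w ^ (p - 1)
      = c ^ (p - 1) * f ^ (1 - p) * |u| ^ (p - 1) := by
    rw [Real.div_rpow (by positivity) (by positivity), Real.mul_rpow hc.le (abs_nonneg u),
      Real.mul_rpow hw.le hf.le, show 1 - p = -(p - 1) by ring, Real.rpow_neg hf.le]
    have := (Real.rpow_pos_of_pos hw (p - 1)).ne'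
    have := (Real.rpow_pos_of_pos hf (p - 1)).ne'
    field_simp
  have e2 : |u| ^ p * w ^ (p - 1) / (w * f) ^ p = w⁻¹ * f ^ (1 - p - 1) * |u| ^ p := by
    rw [Real.mul_rpow hw.le hf.le, show 1 - p - 1 = -p by ring, Real.rpow_neg hf.le,
      Real.rpow_sub_one hw.ne']
    have := (Real.rpow_pos_of_pos hw p).ne'
    have := (Real.rpow_pos_of_pos hf p).ne'
    field_simp
  have e3 : (c * |u| / (w * f)) ^ p * w ^ (p - 1)
      = c ^ p * (w⁻¹ * f ^ (1 - p - 1) * |u| ^ p) := by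
    rw [← e2, Real.div_rpow (by positivity) (by positivity), Real.mul_rpow hc.le (abs_nonneg u)]
    ring
  have e4 : c ^ p = c ^ (p - 1) * c := by
    rw [← Real.rpow_add_one hc.ne', sub_add_cancel]
  have hG : c ^ (p - 1) * f ^ (1 - p) * p * (|u| ^ (p - 2) * u * v)
      ≤ c ^ (p - 1) * f ^ (1 - p) * p * (|u| ^ (p - 1) * |v|) := by gcongr
  have hY2 : p * |v| * (c ^ (p - 1) * f ^ (1 - p) * |u| ^ (p - 1))
      ≤ |v| ^ p * w ^ (p - 1) + (p - 1) * (c ^ p * (w⁻¹ * f ^ (1 - p - 1) * |u| ^ p)) := by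
    rw [← e1, ← e3]
    linarith
  rw [e2]
  have e5 : p * (c ^ p * (w⁻¹ * f ^ (1 - p - 1) * |u| ^ p))
      = (p - 1) * c ^ (p - 1) * (w⁻¹ * f ^ (1 - p - 1) * |u| ^ p) := by
    rw [e4, ← hpc]
    ring
  linarith

/-- Weighted Hardy inequality with positive boundary term for
`w ∈ Q(ℝ₊)` (i.e. `1/w` integrable near `0`). -/
theorem hardy_Q (p η : ℝ) (hp : 1 < p) (hη : 0 < η)
    (w : ℝ → ℝ)
    (hw_pos : ∀ t, 0 < t → 0 < w t)
    (hw_smooth : ContDiffOn ℝ 1 w (Set.Ioi 0))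
    (hw_lim : ∃ a : ENNReal, Filter.Tendsto (fun t => ENNReal.ofReal (w t))
        (nhdsWithin (0:ℝ) (Set.Ioi 0)) (nhds a))
    (hwQ : ∀ b, 0 < b → MeasureTheory.IntegrableOn (fun s => (w s)⁻¹) (Set.Ioo 0 b))
    (u u' : ℝ → ℝ)
    (hu : ∀ t ∈ Set.Ioc (0:ℝ) η, HasDerivWithinAt u (u' t) (Set.Ioc (0:ℝ) η) t)
    (hu'c : ContinuousOn u' (Set.Ioc (0:ℝ) η))
    (hsupp : ∃ a, 0 < a ∧ ∀ t ≤ a, u t = 0) :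
    (∫ t in (0:ℝ)..η, |u' t| ^ p * Wp w p t)
    ≥ (1 - 1 / p) ^ p *
        (∫ t in (0:ℝ)..η, |u t| ^ p * Wp w p t / FQ w t ^ p)
      + ((1 - 1 / p) ^ p) ^ ((p - 1) / p) * fQ w η ^ (1 - p) * |u η| ^ p := by
  obtain ⟨a, ha, hua⟩ := hsupp
  have hp0 : 0 < p := by linarith
  have hc : 0 < 1 - 1 / p := by
    rw [sub_pos, div_lt_one hp0]
    exact hp
  obtain ⟨b, hb, hba⟩ : ∃ b, 0 < b ∧ b < min a η := exists_between (lt_min ha hη)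
  obtain ⟨hba, hbη⟩ := lt_min_iff.1 hba
  have hderiv : ∀ t ∈ Ioo 0 η, HasDerivAt u (u' t) t := fun t ht =>
    (hu t ⟨ht.1, ht.2.le⟩).hasDerivAt (Ioc_mem_nhds ht.1 ht.2)
  have hu'0 : ∀ t, 0 < t → t ≤ b → u' t = 0 := by
    intro t ht htb
    have h0 : HasDerivAt u 0 t := (hasDerivAt_const t (0 : ℝ)).congr_of_eventuallyEq <| by
      filter_upwards [Iio_mem_nhds (htb.trans_lt hba)] with s hs using hua s hs.le
    exact (hderiv t ⟨ht, htb.trans_lt hbη⟩).unique h0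
  have hsub : Icc b η ⊆ Ioc 0 η := fun t ht => ⟨hb.trans_le ht.1, ht.2⟩
  have hwc : ContinuousOn w (Icc b η) :=
    hw_smooth.continuousOn.mono fun t ht => hb.trans_le ht.1
  have hfpos : ∀ t ∈ Icc b η, 0 < fQ w t := fun t ht => fQ_pos hw_pos hwQ (hb.trans_le ht.1)
  have hwpos : ∀ t ∈ Icc b η, 0 < w t := fun t ht => hw_pos t (hb.trans_le ht.1)
  have hfd : ∀ t, 0 < t → HasDerivAt (fQ w) (w t)⁻¹ t := fun t ht =>
    hasDerivAt_fQ hw_pos hw_smooth.continuousOn hwQ ht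
  have hfc : ContinuousOn (fQ w) (Icc b η) := fun t ht =>
    (hfd t (hb.trans_le ht.1)).continuousAt.continuousWithinAt
  have huc : ContinuousOn u (Icc b η) := fun t ht =>
    (hu t (hsub ht)).continuousWithinAt.mono hsub
  have hWc : ContinuousOn (Wp w p) (Icc b η) :=
    hwc.rpow_const fun t ht => Or.inl (hwpos t ht).ne'
  have hAc : ContinuousOn (fun t => |u' t| ^ p * Wp w p t) (Icc b η) :=
    ((hu'c.mono hsub).abs.rpow_const fun t _ => Or.inr hp0.le).mul hWc
  have hupc : ContinuousOn (fun t => |u t| ^ p) (Icc b η) :=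
    huc.abs.rpow_const fun t _ => Or.inr hp0.le
  have hBc : ContinuousOn (fun t => |u t| ^ p * Wp w p t / FQ w t ^ p) (Icc b η) := by
    have hF : ∀ t ∈ Icc b η, 0 < FQ w t := fun t ht => mul_pos (hwpos t ht) (hfpos t ht)
    exact (hupc.mul hWc).div ((hwc.mul hfc).rpow_const fun t ht => Or.inl (hF t ht).ne')
      fun t ht => (Real.rpow_pos_of_pos (hF t ht) p).ne'
  have hsplit : ∀ g : ℝ → ℝ, (∀ t, 0 < t → t ≤ b → g t = 0) → ContinuousOn g (Icc b η) →
      ∫ t in (0:ℝ)..η, g t = ∫ t in b..η, g t := by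
    intro g hg0 hgc
    have hg0' : EqOn (fun _ => (0 : ℝ)) g (uIoc 0 b) := fun t ht => by
      rw [uIoc_of_le hb.le] at ht
      exact (hg0 t ht.1 ht.2).symm
    have h1 : IntervalIntegrable g volume 0 b :=
      (intervalIntegrable_const (c := (0 : ℝ))).congr hg0'
    rw [← intervalIntegral.integral_add_adjacent_intervals h1
      (hgc.intervalIntegrable_of_Icc hbη.le)]
    have h2 : ∫ t in (0:ℝ)..b, g t = 0 :=
      intervalIntegral.integral_zero_ae (Filter.Eventually.of_forall fun t ht => (hg0' ht).symm)
    rw [h2, zero_add]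
  rw [hsplit _ (fun t h0 htb => by simp [hu'0 t h0 htb, hp0.ne']) hAc,
    hsplit _ (fun t _ htb => by simp [hua t (htb.trans hba.le), hp0.ne']) hBc]
  have hcpow : ((1 - 1 / p) ^ p) ^ ((p - 1) / p) = (1 - 1 / p) ^ (p - 1) := by
    rw [← Real.rpow_mul hc.le, mul_div_cancel₀ _ hp0.ne']
  have key := intervalIntegral.sub_le_integral_of_hasDeriv_right_of_le hbη.le
    (g := fun t => (1 - 1 / p) ^ (p - 1) * (fQ w t ^ (1 - p) * |u t| ^ p))
    (φ := fun t => |u' t| ^ p * Wp w p t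
      - (1 - 1 / p) ^ p * (|u t| ^ p * Wp w p t / FQ w t ^ p))
    (continuousOn_const.mul
      ((hfc.rpow_const fun t ht => Or.inl (hfpos t ht).ne').mul hupc))
    (fun t ht => ((((hfd t (hb.trans ht.1)).rpow_const
      (Or.inl (hfpos t ⟨ht.1.le, ht.2.le⟩).ne')).mul
        ((hasDerivAt_abs_rpow (u t) hp).comp t
          (hderiv t ⟨hb.trans ht.1, ht.2⟩))).const_mul _).hasDerivWithinAt)
    ((hAc.sub (continuousOn_const.mul hBc)).integrableOn_Icc)
    (fun t ht => hardy_pointwise hp (hwpos t ⟨ht.1.le, ht.2.le⟩) (hfpos t ⟨ht.1.le, ht.2.le⟩))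
  rw [intervalIntegral.integral_sub (hAc.intervalIntegrable_of_Icc hbη.le)
    ((hBc.intervalIntegrable_of_Icc hbη.le).const_mul _),
    intervalIntegral.integral_const_mul, hua b hba.le, abs_zero, Real.zero_rpow hp0.ne',
    mul_zero, mul_zero, sub_zero] at key
  rw [hcpow]
  linarith
end

section
/- Let 1<p<∞, μ>0 and let w ∈ P(ℝ₊) be admissible, i.e. there exist η₀>0 and K>0 with ∫_t^{η₀} w(s)^{-1} ds ≤ e^{K/√t} for all 0<t<η₀. Then for every sufficiently small η>0 there exist positive numbers C₀, C₁, L (depending only on w, p, η, μ, not on u) such that for every u ∈ C_c^1((0,η]): ∫_0^η ( |u'(t)|^p − (|u(t)|^p / F_η(t)^p)( Λ_p + C₀ / G_η(t)^2 ) ) W_p(t) dt ≥ C₁ ∫_0^η ( |u'(t)|^p + (|u(t)|^p / F_η(t)^p)( Λ_p + C₀ / G_η(t)^2 ) ) W_p(t) · t dt − L |u(η)|^p. -/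
open MeasureTheory Set

/-- `f_η(t) = μ + ∫_t^η w(s)⁻¹ ds`  (case `w ∈ P(ℝ₊)`). -/
noncomputable def fP (w : ℝ → ℝ) (μ η t : ℝ) : ℝ := μ + ∫ s in t..η, (w s)⁻¹

/-- `F_η(t) = w(t) f_η(t)`. -/
noncomputable def FP (w : ℝ → ℝ) (μ η t : ℝ) : ℝ := w t * fP w μ η t

/-- `G_η(t) = μ + ∫_t^η F_η(s)⁻¹ ds`. -/
noncomputable def GP (w : ℝ → ℝ) (μ η t : ℝ) : ℝ := μ + ∫ s in t..η, (FP w μ η s)⁻¹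

/-- Young's inequality in the form adapted to a weight `v` in front of `y ^ p`. -/
lemma weighted_young {p v b y z : ℝ} (hp : 1 < p) (hv : 0 < v) (hb : 0 ≤ b) (hy : 0 ≤ y)
    (hz : 0 ≤ z) :
    p * (b * z ^ (p - 1) * y)
      ≤ v * y ^ p + (p - 1) * b ^ (p / (p - 1)) * v ^ (-(1 / (p - 1))) * z ^ p := by
  have hp0 : 0 < p := by linarith
  have hp1 : 0 < p - 1 := by linarith
  have hconj : p.HolderConjugate (p / (p - 1)) := Real.HolderConjugate.conjExponent hp
  have hzp : 0 ≤ z ^ (p - 1) := Real.rpow_nonneg hz _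
  have h := Real.young_inequality_of_nonneg (a := v ^ (1 / p) * y)
    (b := v ^ (-(1 / p)) * (b * z ^ (p - 1))) (by positivity) (by positivity) hconj
  have e1 : v ^ (1 / p) * y * (v ^ (-(1 / p)) * (b * z ^ (p - 1))) = b * z ^ (p - 1) * y := by
    have : v ^ (1 / p) * v ^ (-(1 / p)) = 1 := by
      rw [← Real.rpow_add hv]; simp
    linear_combination (b * z ^ (p - 1) * y) * this
  have e2 : (v ^ (1 / p) * y) ^ p = v * y ^ p := by
    rw [Real.mul_rpow (by positivity) hy, ← Real.rpow_mul hv.le, one_div_mul_cancel hp0.ne',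
      Real.rpow_one]
  have e3 : (v ^ (-(1 / p)) * (b * z ^ (p - 1))) ^ (p / (p - 1))
      = v ^ (-(1 / (p - 1))) * (b ^ (p / (p - 1)) * z ^ p) := by
    rw [Real.mul_rpow (by positivity) (by positivity), Real.mul_rpow hb hzp,
      ← Real.rpow_mul hv.le, ← Real.rpow_mul hz]
    congr 2
    · field_simp
    · congr 1; field_simp
  rw [e1, e2, e3] at h
  have h2 := mul_le_mul_of_nonneg_left h hp0.le
  refine h2.trans (le_of_eq ?_)
  field_simp

/-- Choice of the constants: the correction `ε / G` of the optimal multiplier produces a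
`1 / G ^ 2` gain which absorbs all first order losses in `t`. -/
lemma exists_hardy_constants {p μ η M : ℝ} (hp : 1 < p) (hμ : 0 < μ) (hη : 0 < η) (hM : 0 < M) :
    ∃ ε C₀ C₁ : ℝ, 0 < ε ∧ 0 < C₀ ∧ 0 < C₁ ∧ ∀ t G : ℝ, 0 < t → t ≤ η → μ ≤ G → t * G ^ 2 ≤ M →
      0 < 1 - C₁ * t ∧
      (p - 1) * ((1 - 1 / p) ^ (p - 1) * (1 + ε / G)) ^ (p / (p - 1))
          * (1 - C₁ * t) ^ (-(1 / (p - 1)))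
        + ((1 - 1 / p) ^ p + C₀ / G ^ 2) * (1 + C₁ * t)
      ≤ (p - 1) * ((1 - 1 / p) ^ (p - 1) * (1 + ε / G))
        + (1 - 1 / p) ^ (p - 1) * ε / G ^ 2 := by
  have hp0 : 0 < p := by linarith
  have hp1 : 0 < p - 1 := by linarith
  obtain ⟨r, hr⟩ : ∃ r, r = 1 / (p - 1) := ⟨_, rfl⟩
  have hr0 : 0 < r := by rw [hr]; positivity
  have hpr : (p - 1) * r = 1 := by rw [hr]; field_simp
  obtain ⟨q, hq⟩ : ∃ q, q = p / (p - 1) := ⟨_, rfl⟩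
  have hq1 : q = 1 + r := by rw [hq, hr]; field_simp; ring
  have hq0 : 0 < q := by linarith
  have hpq : (p - 1) * q = p := by rw [hq]; field_simp
  have hθ : 0 < 1 - 1 / p := by
    rw [sub_pos, div_lt_one hp0]; exact hp
  obtain ⟨Λ, hΛ⟩ : ∃ Λ, Λ = (1 - 1 / p) ^ p := ⟨_, rfl⟩
  have hΛ0 : 0 < Λ := by rw [hΛ]; positivity
  have hb : (1 - 1 / p) ^ (p - 1) = q * Λ := by
    rw [hΛ, Real.rpow_sub_one hθ.ne', hq]
    have : p - 1 ≠ 0 := hp1.ne'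
    field_simp
  have hbq : ((1 - 1 / p) ^ (p - 1)) ^ q = Λ := by
    rw [← Real.rpow_mul hθ.le, hpq, hΛ]
  obtain ⟨ε, hε0, hε1, hε2⟩ : ∃ ε, 0 < ε ∧ 8 * p * ε ≤ 1 ∧ 2 * q * ε ≤ μ := by
    refine ⟨min (1 / (8 * p)) (μ / (2 * q)), by positivity, ?_, ?_⟩
    · calc _ ≤ 8 * p * (1 / (8 * p)) := by gcongr; exact min_le_left _ _
        _ = 1 := by field_simp
    · calc _ ≤ 2 * q * (μ / (2 * q)) := by gcongr; exact min_le_right _ _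
        _ = μ := by field_simp
  obtain ⟨C, hC0, hC1, hC2, hC3⟩ :
      ∃ C, 0 < C ∧ 20 * M * C ≤ ε ∧ 2 * η * C ≤ 1 ∧ 4 * r * η * C ≤ 1 := by
    refine ⟨min (ε / (20 * M)) (min (1 / (2 * η)) (1 / (4 * r * η))), by positivity, ?_, ?_, ?_⟩
    · calc _ ≤ 20 * M * (ε / (20 * M)) := by gcongr; exact min_le_left _ _
        _ = ε := by field_simp
    · calc _ ≤ 2 * η * (1 / (2 * η)) := by
            gcongr; exact (min_le_right _ _).trans (min_le_left _ _)
        _ = 1 := by field_simp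
    · calc _ ≤ 4 * r * η * (1 / (4 * r * η)) := by
            gcongr; exact (min_le_right _ _).trans (min_le_right _ _)
        _ = 1 := by field_simp
  refine ⟨ε, Λ * (ε / 4), C, hε0, by positivity, hC0, fun t G ht htη hG htG => ?_⟩
  have hG0 : 0 < G := by linarith
  obtain ⟨g, hg⟩ : ∃ g, g = 1 / G := ⟨_, rfl⟩
  have hg0 : 0 < g := by rw [hg]; positivity
  have hgG : g * G = 1 := by rw [hg]; field_simp
  obtain ⟨τ, hτ⟩ : ∃ τ, τ = C * t := ⟨_, rfl⟩
  have hτ0 : 0 < τ := by rw [hτ]; positivity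
  have hCt : τ ≤ C * η := by rw [hτ]; gcongr
  have hτ1 : τ ≤ 1 / 2 := by linarith
  have hτ2 : r * τ ≤ 1 / 4 := by
    have := mul_le_mul_of_nonneg_left hCt hr0.le
    linarith
  have htg : t ≤ M * g ^ 2 := by
    calc t = t * G ^ 2 * g ^ 2 := by linear_combination (-t * (g * G + 1)) * hgG
      _ ≤ M * g ^ 2 := by gcongr
  have hτ3 : 20 * τ ≤ ε * g ^ 2 := by
    calc 20 * τ ≤ 20 * (C * (M * g ^ 2)) := by rw [hτ]; gcongr
      _ = 20 * M * C * g ^ 2 := by ring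
      _ ≤ ε * g ^ 2 := by gcongr
  have heg : q * (ε * g) ≤ 1 / 2 := by
    have : 2 * q * ε * g ≤ G * g := by gcongr; linarith
    linarith
  obtain ⟨x, hx⟩ : ∃ x, x = q * (ε * g) + 2 * (r * τ) := ⟨_, rfl⟩
  have hx0 : 0 < x := by rw [hx]; positivity
  have hx1 : x ≤ 1 := by linarith
  have hexp : Real.exp x ≤ 1 + x + x ^ 2 := by
    have := (abs_le.1 (Real.abs_exp_sub_one_sub_id_le (x := x) (by rwa [abs_of_pos hx0]))).2
    linarith
  have hpow1 : (1 + ε * g) ^ q ≤ Real.exp (q * (ε * g)) := by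
    rw [mul_comm q, Real.exp_mul]
    have := Real.add_one_le_exp (ε * g)
    gcongr
    linarith
  have hpow2 : (1 - τ) ^ (-r) ≤ Real.exp (2 * (r * τ)) := by
    have h1 : 0 < 1 - τ := by linarith
    rw [show 2 * (r * τ) = (2 * τ) * r by ring, Real.exp_mul, Real.rpow_neg h1.le,
      ← Real.inv_rpow h1.le]
    have := Real.add_one_le_exp (2 * τ)
    gcongr
    refine le_trans ?_ this
    rw [inv_le_iff_one_le_mul₀ h1]
    have := mul_nonneg hτ0.le (sub_nonneg.2 hτ1)
    linarith
  have hprod : (1 + ε * g) ^ q * (1 - τ) ^ (-r) ≤ 1 + x + x ^ 2 := by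
    refine le_trans ?_ hexp
    rw [hx, Real.exp_add]
    have : 0 ≤ (1 - τ) ^ (-r) := Real.rpow_nonneg (by linarith) _
    gcongr
  have hx2 : (p - 1) * x ^ 2 ≤ 2 * p * q * (ε * g) ^ 2 + 8 * r * τ ^ 2 := by
    have h1 : x ^ 2 ≤ 2 * (q * (ε * g)) ^ 2 + 2 * (2 * (r * τ)) ^ 2 := by
      have := sq_nonneg (q * (ε * g) - 2 * (r * τ))
      rw [hx]; linarith
    calc (p - 1) * x ^ 2 ≤ (p - 1) * (2 * (q * (ε * g)) ^ 2 + 2 * (2 * (r * τ)) ^ 2) := by gcongr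
      _ = _ := by
        linear_combination (2 * q * (ε * g) ^ 2) * hpq + (8 * r * τ ^ 2) * hpr
  have h8 : 2 * p * q * (ε * g) ^ 2 ≤ q * (ε * g ^ 2) / 4 := by
    have : 8 * p * ε * (q * (ε * g ^ 2)) ≤ 1 * (q * (ε * g ^ 2)) := by gcongr
    linarith
  have h9 : 8 * r * τ ^ 2 ≤ 2 * τ := by
    linarith [mul_le_mul_of_nonneg_right hτ2 hτ0.le]
  have h10 : ε / 4 * g ^ 2 * τ ≤ ε / 4 * g ^ 2 := by
    exact mul_le_of_le_one_right (by positivity) (by linarith)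
  have h11 : ε * g ^ 2 ≤ q * (ε * g ^ 2) := by
    exact le_mul_of_one_le_left (by positivity) (by linarith)
  have hmain : (p - 1) * (1 + x + x ^ 2) + (1 + ε / 4 * g ^ 2) * (1 + τ)
      ≤ p * (1 + ε * g) + q * (ε * g ^ 2) := by
    have hxl : (p - 1) * x = p * (ε * g) + 2 * τ := by
      rw [hx]; linear_combination (ε * g) * hpq + 2 * τ * hpr
    linarith
  refine ⟨by rw [← hτ]; linarith, ?_⟩
  have hG2 : ∀ c : ℝ, c / G ^ 2 = c * g ^ 2 := fun c => by rw [hg]; field_simp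
  have hG1 : ε / G = ε * g := by rw [hg]; field_simp
  rw [← hτ, ← hq, ← hr, hG2, hG2, hG1, Real.mul_rpow (by positivity) (by positivity), hbq, hb, ← hΛ]
  calc (p - 1) * (Λ * (1 + ε * g) ^ q) * (1 - τ) ^ (-r)
        + (Λ + Λ * (ε / 4) * g ^ 2) * (1 + τ)
      = Λ * ((p - 1) * ((1 + ε * g) ^ q * (1 - τ) ^ (-r))
        + (1 + ε / 4 * g ^ 2) * (1 + τ)) := by ring
    _ ≤ Λ * ((p - 1) * (1 + x + x ^ 2) + (1 + ε / 4 * g ^ 2) * (1 + τ)) := by gcongr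
    _ ≤ Λ * (p * (1 + ε * g) + q * (ε * g ^ 2)) := by gcongr
    _ = _ := by linear_combination (-Λ * (1 + ε * g)) * hpq

section WeightFunctions

variable {w : ℝ → ℝ} {μ η t : ℝ}

lemma intervalIntegrable_inv_weight (hw_pos : ∀ t, 0 < t → 0 < w t)
    (hw : ContinuousOn w (Ioi 0)) {a b : ℝ} (ha : 0 < a) (hb : 0 < b) :
    IntervalIntegrable (fun s => (w s)⁻¹) volume a b := by
  have hsub : uIcc a b ⊆ Ioi 0 := fun s hs => lt_of_lt_of_le (lt_min ha hb) hs.1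
  exact ((hw.mono hsub).inv₀ fun s hs => (hw_pos s (hsub hs)).ne').intervalIntegrable

lemma hasDerivAt_fP (hw_pos : ∀ t, 0 < t → 0 < w t) (hw : ContinuousOn w (Ioi 0))
    (hη : 0 < η) (ht : 0 < t) : HasDerivAt (fP w μ η) (-(w t)⁻¹) t := by
  have hc : ContinuousOn (fun s => (w s)⁻¹) (Ioi 0) := hw.inv₀ fun s hs => (hw_pos s hs).ne'
  exact (intervalIntegral.integral_hasDerivAt_left
    (intervalIntegrable_inv_weight hw_pos hw ht hη)
    (hc.stronglyMeasurableAtFilter isOpen_Ioi t ht)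
    (hc.continuousAt (Ioi_mem_nhds ht))).const_add μ

lemma le_fP (hw_pos : ∀ t, 0 < t → 0 < w t) (ht : 0 < t) (htη : t ≤ η) : μ ≤ fP w μ η t := by
  have : 0 ≤ ∫ s in t..η, (w s)⁻¹ := intervalIntegral.integral_nonneg htη fun s hs =>
    (inv_pos.2 (hw_pos s (ht.trans_le hs.1))).le
  unfold fP
  linarith

lemma GP_eq_log (hw_pos : ∀ t, 0 < t → 0 < w t) (hw : ContinuousOn w (Ioi 0)) (hμ : 0 < μ)
    (ht : 0 < t) (htη : t ≤ η) : GP w μ η t = μ + Real.log (fP w μ η t / μ) := by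
  have hη : 0 < η := ht.trans_le htη
  have hpos : ∀ s ∈ uIcc t η, 0 < s ∧ 0 < fP w μ η s := fun s hs => by
    rw [uIcc_of_le htη] at hs
    exact ⟨ht.trans_le hs.1, hμ.trans_le (le_fP hw_pos (ht.trans_le hs.1) hs.2)⟩
  have hd : ∀ s ∈ uIcc t η,
      HasDerivAt (fun s => -Real.log (fP w μ η s)) ((FP w μ η s)⁻¹) s := fun s hs => by
    obtain ⟨h0, h1⟩ := hpos s hs
    refine ((hasDerivAt_fP hw_pos hw hη h0).log h1.ne').neg.congr_deriv ?_
    have := hw_pos s h0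
    unfold FP
    field_simp
  have hint : IntervalIntegrable (fun s => (FP w μ η s)⁻¹) volume t η := by
    refine ContinuousOn.intervalIntegrable (ContinuousOn.inv₀ ?_ fun s hs => ?_)
    · exact (hw.mono fun s hs => (hpos s hs).1).mul fun s hs =>
        (hasDerivAt_fP hw_pos hw hη (hpos s hs).1).continuousAt.continuousWithinAt
    · exact (mul_pos (hw_pos s (hpos s hs).1) (hpos s hs).2).ne'
  have hfη : fP w μ η η = μ := by simp [fP]
  rw [GP, intervalIntegral.integral_eq_sub_of_hasDerivAt hd hint, hfη,
    Real.log_div (hpos t left_mem_uIcc).2.ne' hμ.ne']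
  ring

lemma le_GP (hw_pos : ∀ t, 0 < t → 0 < w t) (hw : ContinuousOn w (Ioi 0)) (hμ : 0 < μ)
    (ht : 0 < t) (htη : t ≤ η) : μ ≤ GP w μ η t := by
  rw [GP_eq_log hw_pos hw hμ ht htη]
  have := Real.log_nonneg ((one_le_div hμ).2 (le_fP hw_pos ht htη : μ ≤ fP w μ η t))
  linarith

lemma hasDerivAt_log_fP (hw_pos : ∀ t, 0 < t → 0 < w t) (hw : ContinuousOn w (Ioi 0)) (hμ : 0 < μ)
    (ht : 0 < t) (htη : t ≤ η) :
    HasDerivAt (fun s => μ + Real.log (fP w μ η s / μ)) (-(FP w μ η t)⁻¹) t := by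
  have hf : 0 < fP w μ η t := hμ.trans_le (le_fP hw_pos ht htη)
  refine ((((hasDerivAt_fP hw_pos hw (ht.trans_le htη) ht).div_const μ).log
    (div_pos hf hμ).ne').const_add μ).congr_deriv ?_
  have := hw_pos t ht
  unfold FP
  field_simp

lemma continuousOn_fP (hw_pos : ∀ t, 0 < t → 0 < w t) (hw : ContinuousOn w (Ioi 0)) (hη : 0 < η) :
    ContinuousOn (fP w μ η) (Ioc 0 η) := fun _ ht =>
  (hasDerivAt_fP hw_pos hw hη ht.1).continuousAt.continuousWithinAt

lemma continuousOn_GP (hw_pos : ∀ t, 0 < t → 0 < w t) (hw : ContinuousOn w (Ioi 0))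
    (hμ : 0 < μ) : ContinuousOn (GP w μ η) (Ioc 0 η) := by
  refine ContinuousOn.congr (f := fun s => μ + Real.log (fP w μ η s / μ)) (fun t ht => ?_)
    fun t ht => GP_eq_log hw_pos hw hμ ht.1 ht.2
  exact (hasDerivAt_log_fP hw_pos hw hμ ht.1 ht.2).continuousAt.continuousWithinAt

/-- Admissibility of `w` amounts to boundedness of `t * G(t) ^ 2`. -/
lemma mul_GP_sq_le (hw_pos : ∀ t, 0 < t → 0 < w t) (hw : ContinuousOn w (Ioi 0)) (hμ : 0 < μ)
    {η₀ K : ℝ} (hK : 0 < K) (hadm : ∀ t, 0 < t → t < η₀ →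
      (∫ s in t..η₀, (w s)⁻¹) ≤ Real.exp (K / Real.sqrt t)) (hη : η < η₀)
    (ht : 0 < t) (htη : t ≤ η) :
    t * GP w μ η t ^ 2 ≤ ((μ + Real.log ((μ + 1) / μ)) * Real.sqrt η + K) ^ 2 := by
  have hη0 : 0 < η := ht.trans_le htη
  have hs : 0 < Real.sqrt t := Real.sqrt_pos.2 ht
  have hint : (∫ s in t..η, (w s)⁻¹) ≤ Real.exp (K / Real.sqrt t) := by
    refine le_trans ?_ (hadm t ht (htη.trans_lt hη))
    rw [← intervalIntegral.integral_add_adjacent_intervals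
      (intervalIntegrable_inv_weight hw_pos hw ht hη0)
      (intervalIntegrable_inv_weight hw_pos hw hη0 (hη0.trans hη))]
    have : 0 ≤ ∫ s in η..η₀, (w s)⁻¹ := intervalIntegral.integral_nonneg hη.le fun s hs =>
      (inv_pos.2 (hw_pos s (hη0.trans_le hs.1))).le
    linarith
  have hexp : 1 ≤ Real.exp (K / Real.sqrt t) := Real.one_le_exp (by positivity)
  have hf : fP w μ η t / μ ≤ (μ + 1) / μ * Real.exp (K / Real.sqrt t) := by
    rw [div_mul_eq_mul_div]
    gcongr
    unfold fP
    nlinarith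
  have hf0 : 0 < fP w μ η t := hμ.trans_le (le_fP hw_pos ht htη)
  have hlog := Real.log_le_log (div_pos hf0 hμ) hf
  rw [Real.log_mul (by positivity) (by positivity), Real.log_exp] at hlog
  have hA : 0 ≤ Real.log ((μ + 1) / μ) := Real.log_nonneg ((one_le_div hμ).2 (by linarith))
  have hG0 : 0 < GP w μ η t := hμ.trans_le (le_GP hw_pos hw hμ ht htη)
  have hG : GP w μ η t ≤ μ + Real.log ((μ + 1) / μ) + K / Real.sqrt t := by
    rw [GP_eq_log hw_pos hw hμ ht htη]; linarith
  calc t * GP w μ η t ^ 2 = (GP w μ η t * Real.sqrt t) ^ 2 := by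
        rw [mul_pow, Real.sq_sqrt ht.le]; ring
    _ ≤ ((μ + Real.log ((μ + 1) / μ) + K / Real.sqrt t) * Real.sqrt t) ^ 2 := by gcongr
    _ = ((μ + Real.log ((μ + 1) / μ)) * Real.sqrt t + K) ^ 2 := by
        congr 1; field_simp
    _ ≤ _ := by gcongr

/-- The multiplier `f ^ (1 - p) * (b * (1 + ε / G))` and its derivative. -/
lemma hasDerivAt_hardy_multiplier {p b ε : ℝ} (hw_pos : ∀ t, 0 < t → 0 < w t)
    (hw : ContinuousOn w (Ioi 0)) (hμ : 0 < μ) (ht : 0 < t) (htη : t ≤ η) :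
    HasDerivAt
      (fun s => fP w μ η s ^ (1 - p) * (b * (1 + ε / (μ + Real.log (fP w μ η s / μ)))))
      (fP w μ η t ^ (-p) * (w t)⁻¹ *
        ((p - 1) * (b * (1 + ε / GP w μ η t)) + b * ε / GP w μ η t ^ 2)) t := by
  have hf : 0 < fP w μ η t := hμ.trans_le (le_fP hw_pos ht htη)
  have hG : 0 < GP w μ η t := hμ.trans_le (le_GP hw_pos hw hμ ht htη)
  have hw0 := hw_pos t ht
  have hGe := GP_eq_log hw_pos hw hμ ht htη
  have h1 := (hasDerivAt_fP (μ := μ) hw_pos hw (ht.trans_le htη) ht).rpow_const (p := 1 - p)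
    (Or.inl hf.ne')
  have h2 := (((hasDerivAt_log_fP hw_pos hw hμ ht htη).fun_inv
    (hGe ▸ hG.ne')).const_mul ε |>.const_add 1).const_mul b
  simp only [← div_eq_mul_inv] at h2
  refine (h1.mul h2).congr_deriv ?_
  rw [← hGe, show (1 - p - 1) = -p by ring, show (1 - p) = -p + 1 by ring,
    Real.rpow_add_one hf.ne']
  unfold FP
  field_simp
  ring

end WeightFunctions

/-- The energy density dominates the derivative of the boundary term, pointwise. -/
lemma hardy_density_le {p w f b D P Q τ u u' : ℝ} (hp : 1 < p) (hw : 0 < w) (hf : 0 < f)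
    (hb : 0 ≤ b) (hτ : 0 < 1 - τ)
    (hD : (p - 1) * b ^ (p / (p - 1)) * (1 - τ) ^ (-(1 / (p - 1))) + P * (1 + τ)
      ≤ (p - 1) * b + Q)
    (hDdef : D = f ^ (-p) * w⁻¹ * ((p - 1) * b + Q)) :
    -(D * |u| ^ p + f ^ (1 - p) * b * (p * |u| ^ (p - 2) * u * u'))
      ≤ (|u'| ^ p - |u| ^ p / (w * f) ^ p * P) * w ^ (p - 1)
        - τ * ((|u'| ^ p + |u| ^ p / (w * f) ^ p * P) * w ^ (p - 1)) := by
  have hy := weighted_young (y := |u'| * (w * f)) hp hτ hb (by positivity) (abs_nonneg u)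
  have hwf : 0 < w * f := mul_pos hw hf
  have hsign : -(|u| ^ (p - 2) * u * u') ≤ |u| ^ (p - 1) * |u'| := by
    refine (neg_le_abs _).trans (le_of_eq ?_)
    rw [abs_mul, abs_mul, abs_of_nonneg (Real.rpow_nonneg (abs_nonneg u) _)]
    rcases eq_or_ne u 0 with rfl | hu
    · simp [Real.zero_rpow (sub_pos.2 hp).ne']
    · rw [← Real.rpow_add_one (abs_ne_zero.2 hu)]
      ring_nf
  obtain ⟨k, hk⟩ : ∃ k, k = f ^ (-p) * w⁻¹ := ⟨_, rfl⟩
  have hk0 : 0 < k := by rw [hk]; positivity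
  have hf1 : f ^ (1 - p) = k * (w * f) := by
    rw [hk, show (1 - p) = -p + 1 by ring, Real.rpow_add_one hf.ne']
    field_simp
  have hwfp : w ^ (p - 1) = k * (w * f) ^ p := by
    rw [hk, Real.mul_rpow hw.le hf.le, Real.rpow_neg hf.le, Real.rpow_sub_one hw.ne']
    have := Real.rpow_pos_of_pos hf p
    field_simp
  have hwfp0 : 0 < (w * f) ^ p := Real.rpow_pos_of_pos hwf p
  rw [Real.mul_rpow (abs_nonneg _) hwf.le] at hy
  have hu0 : 0 ≤ |u| ^ p := Real.rpow_nonneg (abs_nonneg u) _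
  have hD' := mul_le_mul_of_nonneg_right hD hu0
  have hs' := mul_le_mul_of_nonneg_left hsign (show 0 ≤ p * b * (w * f) by positivity)
  have hrhs : (|u'| ^ p - |u| ^ p / (w * f) ^ p * P) * w ^ (p - 1)
        - τ * ((|u'| ^ p + |u| ^ p / (w * f) ^ p * P) * w ^ (p - 1))
      = k * ((1 - τ) * (|u'| ^ p * (w * f) ^ p) - P * (1 + τ) * |u| ^ p) := by
    rw [hwfp]; field_simp; ring
  have hlhs : -(D * |u| ^ p + f ^ (1 - p) * b * (p * |u| ^ (p - 2) * u * u'))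
      = k * (p * b * (w * f) * (-(|u| ^ (p - 2) * u * u')) - ((p - 1) * b + Q) * |u| ^ p) := by
    rw [hf1, hDdef, ← hk]; ring
  rw [hrhs, hlhs]
  refine mul_le_mul_of_nonneg_left ?_ hk0.le
  linarith

/-- A function continuous on `(0, η]` and vanishing on `(0, a]` is integrable on `(0, η)`, and
only `(a, η)` contributes to its integral. -/
lemma intervalIntegrable_of_eq_zero_near_zero {h : ℝ → ℝ} {a η : ℝ} (ha : 0 < a) (haη : a ≤ η)
    (hc : ContinuousOn h (Ioc 0 η)) (hz : ∀ t ∈ Ioc 0 a, h t = 0) :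
    IntervalIntegrable h volume 0 η ∧ IntervalIntegrable h volume a η ∧
      ∫ t in (0:ℝ)..η, h t = ∫ t in a..η, h t := by
  have h1 : IntervalIntegrable h volume a η :=
    (hc.mono fun s hs => by
      rw [uIcc_of_le haη] at hs; exact ⟨ha.trans_le hs.1, hs.2⟩).intervalIntegrable
  have h0 : IntervalIntegrable h volume 0 a := by
    refine (intervalIntegrable_const (c := (0 : ℝ))).congr fun s hs => ?_
    rw [uIoc_of_le ha.le] at hs
    exact (hz s hs).symm
  have hi : ∫ t in (0:ℝ)..a, h t = 0 := by
    refine intervalIntegral.integral_zero_ae (ae_of_all _ fun s hs => ?_)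
    rw [uIoc_of_le ha.le] at hs
    exact hz s hs
  refine ⟨h0.trans h1, h1, ?_⟩
  rw [← intervalIntegral.integral_add_adjacent_intervals h0 h1, hi, zero_add]

/-- For admissible `w ∈ P(ℝ₊)` and all sufficiently small `η > 0`,
a refined weighted Hardy inequality holds with first-order (in `t`) remainder and
boundary term `- L |u(η)|^p`. -/
theorem hardy_P_admissible_refined (p μ : ℝ) (hp : 1 < p) (hμ : 0 < μ)
    (w : ℝ → ℝ)
    (hw_pos : ∀ t, 0 < t → 0 < w t)
    (hw_smooth : ContDiffOn ℝ 1 w (Set.Ioi 0))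
    (hw_lim : ∃ a : ENNReal, Filter.Tendsto (fun t => ENNReal.ofReal (w t))
        (nhdsWithin (0:ℝ) (Set.Ioi 0)) (nhds a))
    (hwP : ∀ b, 0 < b → ¬ MeasureTheory.IntegrableOn (fun s => (w s)⁻¹) (Set.Ioo 0 b))
    (hadm : ∃ η₀ K : ℝ, 0 < η₀ ∧ 0 < K ∧ ∀ t, 0 < t → t < η₀ →
        (∫ s in t..η₀, (w s)⁻¹) ≤ Real.exp (K / Real.sqrt t)) :
    ∃ η₁ : ℝ, 0 < η₁ ∧ ∀ η : ℝ, 0 < η → η ≤ η₁ →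
      ∃ C₀ C₁ L : ℝ, 0 < C₀ ∧ 0 < C₁ ∧ 0 < L ∧
        ∀ u u' : ℝ → ℝ,
          (∀ t ∈ Set.Ioc (0:ℝ) η, HasDerivWithinAt u (u' t) (Set.Ioc (0:ℝ) η) t) →
          ContinuousOn u' (Set.Ioc (0:ℝ) η) →
          (∃ a, 0 < a ∧ ∀ t ≤ a, u t = 0) →
          (∫ t in (0:ℝ)..η,
              (|u' t| ^ p - |u t| ^ p / FP w μ η t ^ p *
                  ((1 - 1 / p) ^ p + C₀ / GP w μ η t ^ 2)) * Wp w p t)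
          ≥ C₁ * (∫ t in (0:ℝ)..η,
              (|u' t| ^ p + |u t| ^ p / FP w μ η t ^ p *
                  ((1 - 1 / p) ^ p + C₀ / GP w μ η t ^ 2)) * Wp w p t * t)
            - L * |u η| ^ p := by
  obtain ⟨η₀, K, hη₀, hK, hadm⟩ := hadm
  have hw : ContinuousOn w (Ioi 0) := hw_smooth.continuousOn
  have hp0 : 0 < p := by linarith
  refine ⟨η₀ / 2, by positivity, fun η hη hη1 => ?_⟩
  have hA : 0 ≤ Real.log ((μ + 1) / μ) := Real.log_nonneg ((one_le_div hμ).2 (by linarith))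
  obtain ⟨ε, C₀, C₁, hε, hC₀, hC₁, hconst⟩ := exists_hardy_constants (η := η)
    (M := ((μ + Real.log ((μ + 1) / μ)) * Real.sqrt η + K) ^ 2) hp hμ hη (by positivity)
  have hb0 : 0 < (1 - 1 / p) ^ (p - 1) :=
    Real.rpow_pos_of_pos (by rw [sub_pos, div_lt_one hp0]; exact hp) _
  set b := (1 - 1 / p) ^ (p - 1)
  refine ⟨C₀, C₁, μ ^ (1 - p) * (b * (1 + ε / μ)), hC₀, hC₁, by positivity, ?_⟩
  rintro u u' hu hu' ⟨a₀, ha₀, hzero⟩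
  obtain ⟨a, ha, haη, hza⟩ : ∃ a, 0 < a ∧ a ≤ η ∧ ∀ t ≤ a, u t = 0 :=
    ⟨min a₀ η, lt_min ha₀ hη, min_le_right _ _, fun t ht => hzero t (ht.trans (min_le_left _ _))⟩
  have hu'0 : ∀ t ∈ Ioc 0 a, u' t = 0 := fun t ht => by
    have hsub : Ioc 0 t ⊆ Ioc 0 η := Ioc_subset_Ioc_right (ht.2.trans haη)
    have h1 := (hu t ⟨ht.1, ht.2.trans haη⟩).mono hsub
    have h2 : HasDerivWithinAt u 0 (Ioc 0 t) t :=
      (hasDerivWithinAt_const t _ (0 : ℝ)).congr (fun s hs => hza s (hs.2.trans ht.2)) (hza t ht.2)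
    exact (uniqueDiffOn_Ioc 0 t t ⟨ht.1, le_rfl⟩).eq_deriv _ h1 h2
  have huc : ContinuousOn u (Ioc 0 η) := fun t ht => (hu t ht).continuousWithinAt
  have hwc : ContinuousOn w (Ioc 0 η) := hw.mono fun t ht => ht.1
  have hfc : ContinuousOn (fP w μ η) (Ioc 0 η) := continuousOn_fP hw_pos hw hη
  have hGc : ContinuousOn (GP w μ η) (Ioc 0 η) := continuousOn_GP hw_pos hw hμ
  have hf0 : ∀ t ∈ Ioc 0 η, 0 < fP w μ η t := fun t ht => hμ.trans_le (le_fP hw_pos ht.1 ht.2)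
  have hG0 : ∀ t ∈ Ioc 0 η, 0 < GP w μ η t := fun t ht =>
    hμ.trans_le (le_GP hw_pos hw hμ ht.1 ht.2)
  have hF0 : ∀ t ∈ Ioc 0 η, 0 < FP w μ η t := fun t ht => mul_pos (hw_pos t ht.1) (hf0 t ht)
  have hFc : ContinuousOn (FP w μ η) (Ioc 0 η) := hwc.mul hfc
  have hWc : ContinuousOn (Wp w p) (Ioc 0 η) :=
    hwc.rpow_const fun t ht => Or.inl (hw_pos t ht.1).ne'
  have hdu : ContinuousOn (fun t => |u' t| ^ p) (Ioc 0 η) :=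
    hu'.abs.rpow_const fun _ _ => Or.inr hp0.le
  have hup : ContinuousOn (fun t => |u t| ^ p) (Ioc 0 η) :=
    huc.abs.rpow_const fun _ _ => Or.inr hp0.le
  have hV : ContinuousOn (fun t => |u t| ^ p / FP w μ η t ^ p *
      ((1 - 1 / p) ^ p + C₀ / GP w μ η t ^ 2)) (Ioc 0 η) := by
    refine (hup.div (hFc.rpow_const fun t ht => Or.inl (hF0 t ht).ne') fun t ht => ?_).mul
      (continuousOn_const.add (continuousOn_const.div (hGc.pow 2) fun t ht => ?_))
    · exact (Real.rpow_pos_of_pos (hF0 t ht) p).ne'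
    · exact (pow_pos (hG0 t ht) 2).ne'
  have hI := intervalIntegrable_of_eq_zero_near_zero (h := fun t =>
    (|u' t| ^ p - |u t| ^ p / FP w μ η t ^ p *
      ((1 - 1 / p) ^ p + C₀ / GP w μ η t ^ 2)) * Wp w p t) ha haη ((hdu.sub hV).mul hWc) fun t ht => by
    simp [hza t ht.2, hu'0 t ht, Real.zero_rpow hp0.ne']
  have hJ := intervalIntegrable_of_eq_zero_near_zero (h := fun t =>
    (|u' t| ^ p + |u t| ^ p / FP w μ η t ^ p *
      ((1 - 1 / p) ^ p + C₀ / GP w μ η t ^ 2)) * Wp w p t * t) ha haη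
    (((hdu.add hV).mul hWc).mul continuousOn_id) fun t ht => by
    simp [hza t ht.2, hu'0 t ht, Real.zero_rpow hp0.ne']
  set B : ℝ → ℝ := fun s =>
    fP w μ η s ^ (1 - p) * (b * (1 + ε / (μ + Real.log (fP w μ η s / μ)))) with hB
  have hBd : ∀ t ∈ Ioc 0 η, HasDerivAt B _ t := fun t ht =>
    hasDerivAt_hardy_multiplier (p := p) (b := b) (ε := ε) hw_pos hw hμ ht.1 ht.2
  have hsub : Icc a η ⊆ Ioc 0 η := fun s hs => ⟨ha.trans_le hs.1, hs.2⟩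
  have hBc : ContinuousOn B (Ioc 0 η) := fun t ht => (hBd t ht).continuousAt.continuousWithinAt
  have hud : ∀ t ∈ Ioo a η, HasDerivAt u (u' t) t := fun t ht =>
    (hu t ⟨ha.trans ht.1, ht.2.le⟩).hasDerivAt (Ioc_mem_nhds (ha.trans ht.1) ht.2)
  have key := intervalIntegral.sub_le_integral_of_hasDeriv_right_of_le haη
    ((hBc.mul hup).neg.mono hsub)
    (fun t ht => (((hBd t (hsub (Ioo_subset_Icc_self ht))).mul
      ((hasDerivAt_abs_rpow (u t) hp).comp t (hud t ht))).neg).hasDerivWithinAt)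
    ((intervalIntegrable_iff_integrableOn_Icc_of_le haη).1
      (hI.2.1.sub (hJ.2.1.const_mul C₁)))
    (fun t ht => by
      have htm := hsub (Ioo_subset_Icc_self ht)
      have hGt := GP_eq_log hw_pos hw hμ htm.1 htm.2
      obtain ⟨hv, hle⟩ := hconst t (GP w μ η t) htm.1 htm.2 (le_GP hw_pos hw hμ htm.1 htm.2)
        (mul_GP_sq_le hw_pos hw hμ hK hadm (by linarith) htm.1 htm.2)
      have hGpos := hG0 t htm
      have hd := hardy_density_le (u := u t) (u' := u' t) hp (hw_pos t htm.1) (hf0 t htm)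
        (by positivity) hv hle rfl
      simp only [hB, ← hGt, Function.comp]
      unfold FP Wp
      linarith)
  rw [intervalIntegral.integral_sub hI.2.1 (hJ.2.1.const_mul C₁),
    intervalIntegral.integral_const_mul, ← hI.2.2, ← hJ.2.2] at key
  have hfη : fP w μ η η = μ := by simp [fP]
  have hBη : B η = μ ^ (1 - p) * (b * (1 + ε / μ)) := by
    simp [hB, hfη, hμ.ne']
  simp only [Pi.neg_apply, Pi.mul_apply, hBη, hza a le_rfl, abs_zero, Real.zero_rpow hp0.ne',
    mul_zero, neg_zero, sub_zero] at key
  linarith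
end
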